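/- arXiv:1908.11823 — 7 statements merged into one kernel-verified Lean document; each statement's English description precedes it below -/
import Mathlib

section
/- Let V be a set, l : {-1,1} × V → [0,∞) a loss function, and ψ : [0,1] → V a link function. Then the composite loss (l,ψ) is strictly proper and non-degenerate if and only if both (i) ψ(η) ∈ v*(η) for every η ∈ [0,1], and (ii) v*(η₁) ∩ v*(η₂) ∩ Im ψ = ∅ for all η₁, η₂ ∈ [0,1] with η₁ ≠ η₂. -/
open Set

/-- The conditional risk `L(η,v) = η·l(1,v) + (1−η)·l(−1,v)`, where `true` encodes label `1`
and `false` encodes label `−1`. -/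
def condRisk {V : Type*} (l : Bool → V → ℝ) (η : ℝ) (v : V) : ℝ :=
  η * l true v + (1 - η) * l false v

/-- `v*(η)`: the set of minimizers of `v ↦ L(η,v)` over `V`. -/
def minimizerSet {V : Type*} (l : Bool → V → ℝ) (η : ℝ) : Set V :=
  {v | ∀ w, condRisk l η v ≤ condRisk l η w}

/-- `v*_ψ(η)`: the set of minimizers over `[0,1]` of `q ↦ L(η, ψ q)`. -/
def compMinimizerSet {V : Type*} (l : Bool → V → ℝ) (ψ : ℝ → V) (η : ℝ) : Set ℝ :=
  {q ∈ Icc (0:ℝ) 1 | ∀ q' ∈ Icc (0:ℝ) 1, condRisk l η (ψ q) ≤ condRisk l η (ψ q')}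

/-- `(l,ψ)` is strictly proper: `v*_ψ(η) = {η}` for all `η ∈ [0,1]`. -/
def IsStrictlyProperComposite {V : Type*} (l : Bool → V → ℝ) (ψ : ℝ → V) : Prop :=
  ∀ η ∈ Icc (0:ℝ) 1, compMinimizerSet l ψ η = {η}

/-- `(l,ψ)` is non-degenerate: `Im ψ ∩ v*(η) ≠ ∅` for all `η ∈ [0,1]`. -/
def IsNonDegenerateComposite {V : Type*} (l : Bool → V → ℝ) (ψ : ℝ → V) : Prop :=
  ∀ η ∈ Icc (0:ℝ) 1, (ψ '' Icc (0:ℝ) 1 ∩ minimizerSet l η).Nonempty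

/-- Lemma 2: `(l,ψ)` is strictly proper and non-degenerate iff `ψ(η) ∈ v*(η)` for all
`η ∈ [0,1]` and `v*(η₁) ∩ v*(η₂) ∩ Im ψ = ∅` for all distinct `η₁, η₂ ∈ [0,1]`. -/
theorem strictlyProper_nondegenerate_iff
    {V : Type*} (l : Bool → V → ℝ) (hl : ∀ y v, 0 ≤ l y v) (ψ : ℝ → V) :
    (IsStrictlyProperComposite l ψ ∧ IsNonDegenerateComposite l ψ) ↔
      ((∀ η ∈ Icc (0:ℝ) 1, ψ η ∈ minimizerSet l η) ∧
        ∀ η₁ ∈ Icc (0:ℝ) 1, ∀ η₂ ∈ Icc (0:ℝ) 1, η₁ ≠ η₂ →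
          minimizerSet l η₁ ∩ minimizerSet l η₂ ∩ ψ '' Icc (0:ℝ) 1 = ∅) := by
  constructor
  · rintro ⟨hp, hn⟩
    have key : ∀ η ∈ Icc (0:ℝ) 1, ∀ q ∈ Icc (0:ℝ) 1, ψ q ∈ minimizerSet l η → q = η := by
      intro η hη q hq hm
      have h : q ∈ compMinimizerSet l ψ η := ⟨hq, fun q' _ => hm (ψ q')⟩
      rw [hp η hη] at h
      exact h
    refine ⟨?_, ?_⟩
    · intro η hη
      obtain ⟨v, ⟨q, hq, rfl⟩, hm⟩ := hn η hη
      have h := key η hη q hq hm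
      rwa [h] at hm
    · intro η₁ h₁ η₂ h₂ hne
      rw [Set.eq_empty_iff_forall_notMem]
      rintro v ⟨⟨hm₁, hm₂⟩, q, hq, rfl⟩
      exact hne ((key η₁ h₁ q hq hm₁).symm.trans (key η₂ h₂ q hq hm₂))
  · rintro ⟨hi, hii⟩
    refine ⟨?_, fun η hη => ⟨ψ η, ⟨η, hη, rfl⟩, hi η hη⟩⟩
    intro η hη
    ext q
    rw [Set.mem_singleton_iff]
    constructor
    · rintro ⟨hq, hmin⟩
      by_contra hne
      have hm : ψ q ∈ minimizerSet l η := fun w => (hmin η hη).trans (hi η hη w)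
      have hmem : ψ q ∈ minimizerSet l q ∩ minimizerSet l η ∩ ψ '' Icc (0:ℝ) 1 :=
        ⟨⟨hi q hq, hm⟩, q, hq, rfl⟩
      rw [hii q hq η hη hne] at hmem
      exact hmem
    · rintro rfl
      exact ⟨hη, fun q' _ => hi q hη (ψ q')⟩
end

section
/- Let (l,ψ) be a natural CPE loss on V with inverse link ψ⁻¹ : V → [0,1]. Let P be a probability measure on 𝒳 × {−1,1} with marginal P_X on 𝒳, let η : 𝒳 → [0,1] be a measurable version of the conditional probability x ↦ P(Y = 1 | X = x), and let ℱ be a class of measurable functions f : 𝒳 → V such that the risk R(f) = E_{(X,Y)∼P}[l(Y, f(X))] is finite for all f ∈ ℱ. Suppose f₀ ∈ ℱ attains the minimum of R over ℱ. Then ψ⁻¹(f₀(x)) = η(x) for P_X-almost every x if and only if there exists f ∈ ℱ with ψ⁻¹(f(x)) = η(x) for P_X-almost every x. -/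
open Set MeasureTheory

theorem aux_decomp {𝒳 : Type*} [MeasurableSpace 𝒳]
    (μ : Measure (𝒳 × Bool)) [IsProbabilityMeasure μ]
    (η : 𝒳 → ℝ) (hηm : Measurable η) (hηr : ∀ x, η x ∈ Icc (0:ℝ) 1)
    (hηcond : ∀ A : Set 𝒳, MeasurableSet A →
      (μ (A ×ˢ ({true} : Set Bool))).toReal = ∫ x in A, η x ∂(μ.map Prod.fst)) :
    μ = ((μ.map Prod.fst).withDensity (fun x => ENNReal.ofReal (η x))).map (fun x => (x, true))
      + ((μ.map Prod.fst).withDensity (fun x => ENNReal.ofReal (1 - η x))).map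
        (fun x => (x, false)) := by
  have : IsProbabilityMeasure (μ.map Prod.fst) :=
    Measure.isProbabilityMeasure_map measurable_fst.aemeasurable
  have hint : Integrable η (μ.map Prod.fst) := by
    refine Integrable.of_bound hηm.aestronglyMeasurable 1 (Filter.Eventually.of_forall fun x => ?_)
    rw [Real.norm_eq_abs, abs_of_nonneg (hηr x).1]; exact (hηr x).2
  have h1 : ∀ A : Set 𝒳, MeasurableSet A →
      μ (A ×ˢ ({true} : Set Bool)) = ∫⁻ x in A, ENNReal.ofReal (η x) ∂(μ.map Prod.fst) := by
    intro A hA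
    rw [← ofReal_integral_eq_lintegral_ofReal hint.integrableOn
      (Filter.Eventually.of_forall fun x => (hηr x).1), ← hηcond A hA,
      ENNReal.ofReal_toReal (measure_ne_top _ _)]
  have h0 : ∀ A : Set 𝒳, MeasurableSet A →
      μ (A ×ˢ ({false} : Set Bool)) = ∫⁻ x in A, ENNReal.ofReal (1 - η x) ∂(μ.map Prod.fst) := by
    intro A hA
    have e1 : μ (A ×ˢ ({true} : Set Bool)) + μ (A ×ˢ ({false} : Set Bool))
        = μ.map Prod.fst A := by
      rw [← measure_union _ (hA.prod (measurableSet_singleton _)),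
        Measure.map_apply measurable_fst hA]
      · congr 1; ext ⟨x, b⟩; cases b <;> simp
      · rw [Set.disjoint_left]; rintro ⟨x, b⟩; cases b <;> simp
    have e2 : ∫⁻ x in A, ENNReal.ofReal (η x) ∂(μ.map Prod.fst)
        + ∫⁻ x in A, ENNReal.ofReal (1 - η x) ∂(μ.map Prod.fst) = μ.map Prod.fst A := by
      rw [← lintegral_add_left hηm.ennreal_ofReal]
      have : ∀ x, ENNReal.ofReal (η x) + ENNReal.ofReal (1 - η x) = 1 := by
        intro x
        rw [← ENNReal.ofReal_add (hηr x).1 (by linarith [(hηr x).2])]; simp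
      simp [this]
    rw [← h1 A hA, ← e1] at e2
    exact ((ENNReal.add_right_inj (measure_ne_top _ _)).1 e2).symm
  ext S hS
  have mt : Measurable (fun x : 𝒳 => (x, true)) := by fun_prop
  have mf : Measurable (fun x : 𝒳 => (x, false)) := by fun_prop
  rw [Measure.add_apply, Measure.map_apply mt hS, Measure.map_apply mf hS,
    withDensity_apply _ (mt hS), withDensity_apply _ (mf hS), ← h1 _ (mt hS), ← h0 _ (mf hS),
    ← measure_union _ ((mf hS).prod (measurableSet_singleton _))]
  · congr 1; ext ⟨x, b⟩; cases b <;> simp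
  · rw [Set.disjoint_left]; rintro ⟨x, b⟩; cases b <;> simp

theorem aux_risk {𝒳 : Type*} [MeasurableSpace 𝒳]
    (μ : Measure (𝒳 × Bool)) [IsProbabilityMeasure μ]
    (η : 𝒳 → ℝ) (hηm : Measurable η) (hηr : ∀ x, η x ∈ Icc (0:ℝ) 1)
    (hηcond : ∀ A : Set 𝒳, MeasurableSet A →
      (μ (A ×ˢ ({true} : Set Bool))).toReal = ∫ x in A, η x ∂(μ.map Prod.fst))
    (g : 𝒳 × Bool → ℝ) (hg : Integrable g μ) :
    Integrable (fun x => η x * g (x, true) + (1 - η x) * g (x, false)) (μ.map Prod.fst) ∧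
    ∫ p, g p ∂μ = ∫ x, η x * g (x, true) + (1 - η x) * g (x, false) ∂(μ.map Prod.fst) := by
  have key := aux_decomp μ η hηm hηr hηcond
  generalize μ.map Prod.fst = ν at *
  subst key
  have et : MeasurableEmbedding (fun x : 𝒳 => (x, true)) := MeasurableEmbedding.prodMk_right MeasurableEmbedding.id true
  have ef : MeasurableEmbedding (fun x : 𝒳 => (x, false)) := MeasurableEmbedding.prodMk_right MeasurableEmbedding.id false
  obtain ⟨ht, hf⟩ := integrable_add_measure.1 hg
  rw [integral_add_measure ht hf, et.integral_map, ef.integral_map]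
  rw [et.integrable_map_iff] at ht
  rw [ef.integrable_map_iff] at hf
  have h1m : Measurable fun x => ENNReal.ofReal (η x) := hηm.ennreal_ofReal
  have h0m : Measurable fun x => ENNReal.ofReal (1 - η x) :=
    (measurable_const.sub hηm).ennreal_ofReal
  have r1 : ∀ x, (ENNReal.ofReal (η x)).toReal = η x := fun x =>
    ENNReal.toReal_ofReal (hηr x).1
  have r0 : ∀ x, (ENNReal.ofReal (1 - η x)).toReal = 1 - η x := fun x =>
    ENNReal.toReal_ofReal (by linarith [(hηr x).2])
  rw [integrable_withDensity_iff_integrable_smul' h1m (by simp)] at ht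
  rw [integrable_withDensity_iff_integrable_smul' h0m (by simp)] at hf
  rw [integral_withDensity_eq_integral_toReal_smul h1m (by simp),
    integral_withDensity_eq_integral_toReal_smul h0m (by simp)]
  simp only [r1, r0, smul_eq_mul, Function.comp_def] at ht hf ⊢
  exact ⟨ht.add hf, (integral_add ht hf).symm⟩

/-- Theorem 1 (retrieving the posterior with the true risk minimizer). Let `(l,ψ)` be a natural
CPE loss with inverse link `ψinv`. Let `μ` be a probability measure on `𝒳 × {−1,1}`, `η` a
measurable version of `x ↦ P(Y = 1 | X = x)`, and `F` a class of measurable functions with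
finite risk, with `f₀ ∈ F` a risk minimizer. Then `ψinv ∘ f₀ = η` a.e. `[P_X]` iff some
`f ∈ F` satisfies `ψinv ∘ f = η` a.e. `[P_X]`. -/
theorem true_risk_minimizer_recovers_posterior_iff
    {𝒳 V : Type*} [MeasurableSpace 𝒳] [MeasurableSpace V]
    (l : Bool → V → ℝ) (hl : ∀ y v, 0 ≤ l y v) (ψ : ℝ → V)
    -- natural CPE loss: strictly proper, non-degenerate, disjoint cover
    (hstrict : ∀ η ∈ Icc (0:ℝ) 1, compMinimizerSet l ψ η = {η})
    (hnondeg : ∀ η ∈ Icc (0:ℝ) 1, (ψ '' Icc (0:ℝ) 1 ∩ minimizerSet l η).Nonempty)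
    (hcover : (⋃ η ∈ Icc (0:ℝ) 1, minimizerSet l η) = univ)
    (hdisj : ∀ η₁ ∈ Icc (0:ℝ) 1, ∀ η₂ ∈ Icc (0:ℝ) 1, η₁ ≠ η₂ →
      minimizerSet l η₁ ∩ minimizerSet l η₂ = ∅)
    -- the inverse link ψ⁻¹ : V → [0,1], mapping v to the unique η with v ∈ v*(η)
    (ψinv : V → ℝ)
    (hψinv : ∀ v : V, ψinv v ∈ Icc (0:ℝ) 1 ∧ v ∈ minimizerSet l (ψinv v))
    -- the distribution and a measurable version of the class probability
    (μ : Measure (𝒳 × Bool)) [IsProbabilityMeasure μ]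
    (η : 𝒳 → ℝ) (hηm : Measurable η) (hηr : ∀ x, η x ∈ Icc (0:ℝ) 1)
    (hηcond : ∀ A : Set 𝒳, MeasurableSet A →
      (μ (A ×ˢ ({true} : Set Bool))).toReal = ∫ x in A, η x ∂(μ.map Prod.fst))
    -- the hypothesis class: measurable functions with finite risk
    (F : Set (𝒳 → V)) (hFmeas : ∀ f ∈ F, Measurable f)
    (hFint : ∀ f ∈ F, Integrable (fun p : 𝒳 × Bool => l p.2 (f p.1)) μ)
    -- f₀ attains the minimum of the risk over F
    (f₀ : 𝒳 → V) (hf₀ : f₀ ∈ F)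
    (hmin : ∀ f ∈ F, ∫ p : 𝒳 × Bool, l p.2 (f₀ p.1) ∂μ ≤ ∫ p : 𝒳 × Bool, l p.2 (f p.1) ∂μ) :
    (∀ᵐ x ∂(μ.map Prod.fst), ψinv (f₀ x) = η x) ↔
      ∃ f ∈ F, ∀ᵐ x ∂(μ.map Prod.fst), ψinv (f x) = η x := by
  refine ⟨fun h => ⟨f₀, hf₀, h⟩, ?_⟩
  rintro ⟨f, hf, h⟩
  obtain ⟨i0, e0⟩ := aux_risk μ η hηm hηr hηcond _ (hFint f₀ hf₀)
  obtain ⟨i1, e1⟩ := aux_risk μ η hηm hηr hηcond _ (hFint f hf)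
  have hm := hmin f hf
  rw [e0, e1] at hm
  have hfm : ∀ᵐ x ∂(μ.map Prod.fst), f x ∈ minimizerSet l (η x) := by
    filter_upwards [h] with x hx
    rw [← hx]; exact (hψinv (f x)).2
  have hle : (fun x => η x * l true (f x) + (1 - η x) * l false (f x)) ≤ᵐ[μ.map Prod.fst]
      (fun x => η x * l true (f₀ x) + (1 - η x) * l false (f₀ x)) := by
    filter_upwards [hfm] with x hx
    exact hx (f₀ x)
  have heq := (integral_eq_iff_of_ae_le i1 i0 hle).1 (le_antisymm (integral_mono_ae i1 i0 hle) hm)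
  filter_upwards [hfm, heq] with x hx hxe
  have hx0 : f₀ x ∈ minimizerSet l (η x) := by
    intro w
    have := hx w
    unfold condRisk at this ⊢
    linarith
  by_contra hne
  have hd := hdisj _ (hψinv (f₀ x)).1 _ (hηr x) hne
  have hmem : f₀ x ∈ minimizerSet l (ψinv (f₀ x)) ∩ minimizerSet l (η x) :=
    ⟨(hψinv (f₀ x)).2, hx0⟩
  rw [hd] at hmem
  exact hmem
end

section
/- Let V be a set, l : {-1,1} × V → [0,∞) a loss, and ψ : [0,1] → V a link such that the partial composite losses q ↦ l(1,ψ(q)) and q ↦ l(−1,ψ(q)) are continuous on [0,1], and such that for every η ∈ [0,1] the map q ↦ L_ψ(η,q) is strictly decreasing on [0,η] and strictly increasing on [η,1]. Then for every ε > 0 there exists δ = δ(ε) > 0 such that for all η, η̂ ∈ [0,1]: if ΔL_ψ(η,η̂) < δ then |η − η̂| < ε. -/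
open Set

/-- The conditional risk of the composite loss:
`L_ψ(η,q) = η·l(1,ψ(q)) + (1−η)·l(−1,ψ(q))`, with `true` encoding label `1`. -/
def condRiskComp {V : Type*} (l : Bool → V → ℝ) (ψ : ℝ → V) (η q : ℝ) : ℝ :=
  η * l true (ψ q) + (1 - η) * l false (ψ q)

/-- Lemma (Probineq): if the partial composite losses are continuous on `[0,1]` and for every
`η ∈ [0,1]` the conditional risk `q ↦ L_ψ(η,q)` is strictly decreasing on `[0,η]` and strictly
increasing on `[η,1]` (so its minimum over `[0,1]` is attained at `q = η` and
`ΔL_ψ(η,q) = L_ψ(η,q) − L_ψ(η,η)`), then for every `ε > 0` there is `δ > 0` such that for all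
`η, η̂ ∈ [0,1]`, `ΔL_ψ(η,η̂) < δ` implies `|η − η̂| < ε`. -/
theorem small_excess_risk_implies_close_probability
    {V : Type*} (l : Bool → V → ℝ) (hl : ∀ y v, 0 ≤ l y v) (ψ : ℝ → V)
    (hcont1 : ContinuousOn (fun q => l true (ψ q)) (Icc (0:ℝ) 1))
    (hcont2 : ContinuousOn (fun q => l false (ψ q)) (Icc (0:ℝ) 1))
    (hmono : ∀ η ∈ Icc (0:ℝ) 1,
      StrictAntiOn (fun q => condRiskComp l ψ η q) (Icc (0:ℝ) η) ∧
      StrictMonoOn (fun q => condRiskComp l ψ η q) (Icc η 1)) :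
    ∀ ε > 0, ∃ δ > 0, ∀ η ∈ Icc (0:ℝ) 1, ∀ η' ∈ Icc (0:ℝ) 1,
      condRiskComp l ψ η η' - condRiskComp l ψ η η < δ → |η - η'| < ε := by
  intro ε hε
  have hF : ContinuousOn (fun p : ℝ × ℝ => condRiskComp l ψ p.1 p.2 - condRiskComp l ψ p.1 p.1)
      (Icc (0:ℝ) 1 ×ˢ Icc (0:ℝ) 1) := by
    have m1 : MapsTo (Prod.fst : ℝ × ℝ → ℝ) (Icc (0:ℝ) 1 ×ˢ Icc (0:ℝ) 1) (Icc (0:ℝ) 1) :=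
      fun p hp => hp.1
    have m2 : MapsTo (Prod.snd : ℝ × ℝ → ℝ) (Icc (0:ℝ) 1 ×ˢ Icc (0:ℝ) 1) (Icc (0:ℝ) 1) :=
      fun p hp => hp.2
    have a1 := hcont1.comp continuous_fst.continuousOn m1
    have a2 := hcont1.comp continuous_snd.continuousOn m2
    have b1 := hcont2.comp continuous_fst.continuousOn m1
    have b2 := hcont2.comp continuous_snd.continuousOn m2
    have f1 : ContinuousOn (Prod.fst : ℝ × ℝ → ℝ) (Icc (0:ℝ) 1 ×ˢ Icc (0:ℝ) 1) :=
      continuous_fst.continuousOn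
    have c1 : ContinuousOn (fun p : ℝ × ℝ => 1 - p.1) (Icc (0:ℝ) 1 ×ˢ Icc (0:ℝ) 1) :=
      continuousOn_const.sub f1
    exact ((f1.mul a2).add (c1.mul b2)).sub ((f1.mul a1).add (c1.mul b1))
  have hK : IsCompact ((Icc (0:ℝ) 1 ×ˢ Icc (0:ℝ) 1) ∩ {p : ℝ × ℝ | ε ≤ |p.1 - p.2|}) :=
    (isCompact_Icc.prod isCompact_Icc).inter_right
      (isClosed_le continuous_const (by fun_prop))
  rcases eq_empty_or_nonempty
    ((Icc (0:ℝ) 1 ×ˢ Icc (0:ℝ) 1) ∩ {p : ℝ × ℝ | ε ≤ |p.1 - p.2|}) with h | h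
  · refine ⟨1, one_pos, fun a ha b hb _ => ?_⟩
    by_contra hc
    have : (a, b) ∈ ((Icc (0:ℝ) 1 ×ˢ Icc (0:ℝ) 1) ∩ {p : ℝ × ℝ | ε ≤ |p.1 - p.2|}) :=
      ⟨⟨ha, hb⟩, not_lt.mp hc⟩
    rw [h] at this
    exact this
  · obtain ⟨⟨a, b⟩, ⟨⟨ha, hb⟩, hab⟩, hmin⟩ := hK.exists_isMinOn h (hF.mono inter_subset_left)
    simp only [mem_ofPred_eq] at ha hb hab
    refine ⟨condRiskComp l ψ a b - condRiskComp l ψ a a, ?_, fun c hc d hd hlt => ?_⟩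
    · rw [gt_iff_lt, sub_pos]
      have hne : a ≠ b := by
        rintro rfl
        simp at hab
        linarith
      rcases lt_or_gt_of_ne hne with h1 | h1
      · exact (hmono a ha).2 ⟨le_rfl, ha.2⟩ ⟨h1.le, hb.2⟩ h1
      · exact (hmono a ha).1 ⟨hb.1, h1.le⟩ ⟨ha.1, le_rfl⟩ h1
    · by_contra hcon
      have := isMinOn_iff.mp hmin (c, d) ⟨⟨hc, hd⟩, not_lt.mp hcon⟩
      exact absurd hlt (not_lt.mpr this)
end

section
/- Let V be a set, l : {-1,1} × V → [0,∞) a loss, and ψ : [0,1] → V a link such that q ↦ l(1,ψ(q)) and q ↦ l(−1,ψ(q)) are continuous on [0,1] and, for every η ∈ [0,1], q ↦ L_ψ(η,q) is strictly decreasing on [0,η] and strictly increasing on [η,1]. Let P be a probability measure on 𝒳 × {−1,1} with marginal P_X and let η : 𝒳 → [0,1] be a measurable version of x ↦ P(Y = 1 | X = x). If (η̂_n)_{n∈ℕ} is a sequence of measurable functions 𝒳 → [0,1] with E_{X∼P_X}[ΔL_ψ(η(X), η̂_n(X))] → 0 as n → ∞, then η̂_n(X) converges to η(X) in probability (for every ε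 > 0, P_X(|η(X) − η̂_n(X)| > ε) → 0) and in L¹ (E_{X∼P_X}|η(X) − η̂_n(X)| → 0). -/
open Set MeasureTheory Filter

lemma condRiskComp_key {V : Type*}
    (l : Bool → V → ℝ) (ψ : ℝ → V)
    (hcont1 : ContinuousOn (fun q => l true (ψ q)) (Icc (0:ℝ) 1))
    (hcont2 : ContinuousOn (fun q => l false (ψ q)) (Icc (0:ℝ) 1))
    (hmono : ∀ η ∈ Icc (0:ℝ) 1,
      StrictAntiOn (fun q => condRiskComp l ψ η q) (Icc (0:ℝ) η) ∧
      StrictMonoOn (fun q => condRiskComp l ψ η q) (Icc η 1))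
    (ε : ℝ) (hε : 0 < ε) :
    ∃ C : ℝ, 0 < C ∧ ∀ a ∈ Icc (0:ℝ) 1, ∀ q ∈ Icc (0:ℝ) 1,
      |a - q| ≤ ε + C * (condRiskComp l ψ a q - condRiskComp l ψ a a) := by
  have hpos : ∀ a ∈ Icc (0:ℝ) 1, ∀ q ∈ Icc (0:ℝ) 1, a ≠ q →
      0 < condRiskComp l ψ a q - condRiskComp l ψ a a := by
    intro a ha q hq hne
    rcases lt_or_gt_of_ne hne with h | h
    · have := (hmono a ha).2 ⟨le_refl a, ha.2⟩ ⟨h.le, hq.2⟩ h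
      simp only at this
      linarith
    · have := (hmono a ha).1 ⟨hq.1, h.le⟩ ⟨ha.1, le_refl a⟩ h
      simp only at this
      linarith
  have hnn : ∀ a ∈ Icc (0:ℝ) 1, ∀ q ∈ Icc (0:ℝ) 1,
      0 ≤ condRiskComp l ψ a q - condRiskComp l ψ a a := by
    intro a ha q hq
    by_cases h : a = q
    · subst h; simp
    · exact (hpos a ha q hq h).le
  let K : Set (ℝ × ℝ) := (Icc (0:ℝ) 1 ×ˢ Icc (0:ℝ) 1) ∩ {p | ε ≤ |p.1 - p.2|}
  have hK : IsCompact K :=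
    (isCompact_Icc.prod isCompact_Icc).inter_right
      (isClosed_le continuous_const (by fun_prop))
  have hF : ContinuousOn
      (fun p : ℝ × ℝ => condRiskComp l ψ p.1 p.2 - condRiskComp l ψ p.1 p.1) K := by
    have m1 : MapsTo (Prod.fst : ℝ × ℝ → ℝ) K (Icc 0 1) := fun p hp => hp.1.1
    have m2 : MapsTo (Prod.snd : ℝ × ℝ → ℝ) K (Icc 0 1) := fun p hp => hp.1.2
    have a1 := hcont1.comp continuousOn_fst m1
    have a2 := hcont1.comp continuousOn_snd m2
    have b1 := hcont2.comp continuousOn_fst m1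
    have b2 := hcont2.comp continuousOn_snd m2
    have c : ContinuousOn (Prod.fst : ℝ × ℝ → ℝ) K := continuousOn_fst
    have d : ContinuousOn (fun p : ℝ × ℝ => 1 - p.1) K := continuousOn_const.sub c
    exact ((c.mul a2).add (d.mul b2)).sub ((c.mul a1).add (d.mul b1))
  have hδ : ∃ δ : ℝ, 0 < δ ∧ ∀ p ∈ K,
      δ ≤ condRiskComp l ψ p.1 p.2 - condRiskComp l ψ p.1 p.1 := by
    rcases K.eq_empty_or_nonempty with h | h
    · exact ⟨1, one_pos, by simp [h]⟩
    · obtain ⟨p, hp, hmin⟩ := hK.exists_isMinOn h hF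
      refine ⟨_, hpos p.1 hp.1.1 p.2 hp.1.2 ?_, fun q hq => hmin hq⟩
      intro he
      have := hp.2
      simp only [Set.mem_ofPred_eq, he, sub_self, abs_zero] at this
      linarith
  obtain ⟨δ, hδ, hmin⟩ := hδ
  refine ⟨1 / δ, by positivity, fun a ha q hq => ?_⟩
  by_cases h : ε ≤ |a - q|
  · have h1 := hmin (a, q) ⟨⟨ha, hq⟩, h⟩
    simp only at h1
    have h2 : |a - q| ≤ 1 := abs_le.2 ⟨by linarith [ha.1, hq.2], by linarith [ha.2, hq.1]⟩
    have h3 : 1 ≤ 1 / δ * (condRiskComp l ψ a q - condRiskComp l ψ a a) := by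
      rw [one_div, ← div_eq_inv_mul, le_div_iff₀ hδ]; linarith
    linarith
  · have := mul_nonneg (one_div_pos.2 hδ).le (hnn a ha q hq)
    linarith

/-- If the partial composite losses are continuous on `[0,1]`, the conditional risk
`q ↦ L_ψ(η,q)` is strictly decreasing on `[0,η]` and strictly increasing on `[η,1]` for every
`η ∈ [0,1]`, and the expected conditional excess risk of a sequence of probability estimates
`η̂_n` tends to `0`, then `η̂_n(X) → η(X)` in probability and in `L¹`. -/
theorem vanishing_excess_risk_implies_convergence
    {𝒳 V : Type*} [MeasurableSpace 𝒳]
    (l : Bool → V → ℝ) (hl : ∀ y v, 0 ≤ l y v) (ψ : ℝ → V)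
    (hcont1 : ContinuousOn (fun q => l true (ψ q)) (Icc (0:ℝ) 1))
    (hcont2 : ContinuousOn (fun q => l false (ψ q)) (Icc (0:ℝ) 1))
    (hmono : ∀ η ∈ Icc (0:ℝ) 1,
      StrictAntiOn (fun q => condRiskComp l ψ η q) (Icc (0:ℝ) η) ∧
      StrictMonoOn (fun q => condRiskComp l ψ η q) (Icc η 1))
    (μ : Measure (𝒳 × Bool)) [IsProbabilityMeasure μ]
    (η : 𝒳 → ℝ) (hηm : Measurable η) (hηr : ∀ x, η x ∈ Icc (0:ℝ) 1)
    (hηcond : ∀ A : Set 𝒳, MeasurableSet A →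
      (μ (A ×ˢ ({true} : Set Bool))).toReal = ∫ x in A, η x ∂(μ.map Prod.fst))
    (ηhat : ℕ → 𝒳 → ℝ) (hηhatm : ∀ n, Measurable (ηhat n))
    (hηhatr : ∀ n x, ηhat n x ∈ Icc (0:ℝ) 1)
    (hInt : ∀ n, Integrable
      (fun x => condRiskComp l ψ (η x) (ηhat n x) - condRiskComp l ψ (η x) (η x))
      (μ.map Prod.fst))
    (hconv : Tendsto
      (fun n => ∫ x, (condRiskComp l ψ (η x) (ηhat n x) - condRiskComp l ψ (η x) (η x))
        ∂(μ.map Prod.fst)) atTop (nhds 0)) :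
    (∀ ε > 0, Tendsto
        (fun n => ((μ.map Prod.fst) {x | ε < |η x - ηhat n x|}).toReal) atTop (nhds 0)) ∧
      Tendsto (fun n => ∫ x, |η x - ηhat n x| ∂(μ.map Prod.fst)) atTop (nhds 0) := by
  have hprob : IsProbabilityMeasure (μ.map Prod.fst) :=
    Measure.isProbabilityMeasure_map measurable_fst.aemeasurable
  set ν := μ.map Prod.fst with hν
  have hI : ∀ n, Integrable (fun x => |η x - ηhat n x|) ν := by
    intro n
    refine Integrable.of_bound (C := 1)
      ((hηm.sub (hηhatm n)).abs.aestronglyMeasurable) (Eventually.of_forall fun x => ?_)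
    rw [Real.norm_eq_abs, abs_abs]
    have h1 := hηr x
    have h2 := hηhatr n x
    exact abs_le.2 ⟨by linarith [h1.1, h2.2], by linarith [h1.2, h2.1]⟩
  have hL1 : Tendsto (fun n => ∫ x, |η x - ηhat n x| ∂ν) atTop (nhds 0) := by
    rw [Metric.tendsto_atTop]
    intro ε hε
    obtain ⟨C, hC, hkey⟩ := condRiskComp_key l ψ hcont1 hcont2 hmono (ε / 2) (by positivity)
    have hlim := hconv.const_mul C
    rw [mul_zero] at hlim
    obtain ⟨N, hN⟩ := eventually_atTop.1 (hlim.eventually (gt_mem_nhds (half_pos hε)))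
    refine ⟨N, fun n hn => ?_⟩
    have h0 : 0 ≤ ∫ x, |η x - ηhat n x| ∂ν := integral_nonneg fun x => abs_nonneg _
    rw [Real.dist_eq, sub_zero, abs_of_nonneg h0]
    have h1 := integral_mono (hI n) ((integrable_const (ε / 2)).add ((hInt n).const_mul C))
      (fun x => hkey (η x) (hηr x) (ηhat n x) (hηhatr n x))
    have h2 := integral_add (integrable_const (μ := ν) (ε / 2)) ((hInt n).const_mul C)
    rw [integral_const_mul] at h2
    simp only [integral_const, probReal_univ, one_smul] at h2
    have h3 := hN n hn
    simp only [Pi.add_apply] at h1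
    linarith
  refine ⟨fun ε hε => ?_, hL1⟩
  have hlim := hL1.div_const ε
  rw [zero_div] at hlim
  refine squeeze_zero (fun n => ENNReal.toReal_nonneg) (fun n => ?_) hlim
  rw [le_div_iff₀ hε, mul_comm]
  have hm := mul_meas_ge_le_integral_of_nonneg
    (Eventually.of_forall fun x => abs_nonneg (η x - ηhat n x)) (hI n) ε
  refine le_trans (mul_le_mul_of_nonneg_left ?_ hε.le) hm
  refine measureReal_mono (fun x hx => ?_)
  rw [Set.mem_ofPred_eq] at hx ⊢
  exact hx.le
end

section
/- The constant 1/2 in the inequality (x − y)² ≤ c·( x·ln(x/y) + (1−x)·ln((1−x)/(1−y)) ) is optimal: for every c < 1/2 there exist x, y ∈ (0,1) such that (x − y)² > c·( x·ln(x/y) + (1−x)·ln((1−x)/(1−y)) ). -/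
open Set

/-- The binary Kullback–Leibler divergence `x·ln(x/y) + (1−x)·ln((1−x)/(1−y))`, which is the
conditional excess risk `ΔL(x,y)` of the logistic CPE loss. -/
noncomputable def klBin (x y : ℝ) : ℝ :=
  x * Real.log (x / y) + (1 - x) * Real.log ((1 - x) / (1 - y))

/-- Optimality of the constant `1/2` in the binary Pinsker-type inequality
`(x − y)² ≤ c·ΔL(x,y)`: for every `c < 1/2` there exist `x, y ∈ (0,1)` with
`(x − y)² > c·ΔL(x,y)`. -/
theorem half_is_optimal_constant :
    ∀ c : ℝ, c < 1/2 →
      ∃ x ∈ Ioo (0:ℝ) 1, ∃ y ∈ Ioo (0:ℝ) 1, c * klBin x y < (x - y)^2 := by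
  intro c hc
  obtain ⟨d, hcd, hd0, hd⟩ : ∃ d : ℝ, c ≤ d ∧ 1/4 ≤ d ∧ d < 1/2 :=
    ⟨max c (1/4), le_max_left _ _, le_max_right _ _, max_lt hc (by norm_num)⟩
  obtain ⟨t, ht⟩ : ∃ t : ℝ, t = (1 - 2*d)/4 := ⟨_, rfl⟩
  have ht0 : 0 < t := by linarith
  have ht1 : t ≤ 1/8 := by linarith
  have hp : 0 < 1 - 4*t^2 := by nlinarith
  have hK : klBin (1/2) (1/2 - t) = -(1/2) * Real.log (1 - 4*t^2) := by
    unfold klBin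
    have h1 : (1:ℝ) - 4*t^2 = (1 - 2*t) * (1 + 2*t) := by ring
    have h2 : (1/2:ℝ) / (1/2 - t) = (1 - 2*t)⁻¹ := by
      have : (1 - 2*t) ≠ 0 := by linarith
      have : (1/2 - t) ≠ 0 := by linarith
      field_simp
    have h3 : (1 - 1/2:ℝ) / (1 - (1/2 - t)) = (1 + 2*t)⁻¹ := by
      have h4 : (1 + 2*t) ≠ 0 := by linarith
      have h5 : (1 - (1/2 - t)) = (1 + 2*t) / 2 := by ring
      rw [h5]
      field_simp
      norm_num
    rw [h1, h2, h3, Real.log_inv, Real.log_inv, Real.log_mul (by linarith) (by linarith)]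
    ring
  have hl := Real.one_sub_inv_le_log_of_pos hp
  have hu := Real.log_nonpos hp.le (by nlinarith)
  refine ⟨1/2, by constructor <;> norm_num, 1/2 - t, ⟨by linarith, by linarith⟩, ?_⟩
  rw [hK]
  have e : (1 - 4*t^2)⁻¹ - 1 = 4*t^2 / (1 - 4*t^2) := by field_simp; ring
  calc c * (-(1/2) * Real.log (1 - 4*t^2)) ≤ d * (-(1/2) * Real.log (1 - 4*t^2)) :=
        mul_le_mul_of_nonneg_right hcd (by linarith)
    _ ≤ d * (1/2 * (4*t^2 / (1 - 4*t^2))) :=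
        mul_le_mul_of_nonneg_left (by linarith) (by linarith)
    _ = t^2 * (2*d / (1 - 4*t^2)) := by ring
    _ < t^2 * 1 := by
        apply mul_lt_mul_of_pos_left _ (by positivity)
        rw [div_lt_one hp]
        nlinarith
    _ = (1/2 - (1/2 - t))^2 := by ring
end

section
/- Let l be the hinge loss on V = ℝ, given by l(y,v) = max(0, 1 − yv). Then there exists no link function ψ : [0,1] → ℝ such that the composite loss (l,ψ) is strictly proper and non-degenerate. -/
open Set

/-- The conditional risk of the hinge loss `l(y,v) = max(0, 1 − yv)`:
`L(η,v) = η·max(0,1−v) + (1−η)·max(0,1+v)`. -/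
def hingeCondRisk (η v : ℝ) : ℝ :=
  η * max 0 (1 - v) + (1 - η) * max 0 (1 + v)

/-- `v*(η)`: the set of minimizers of `v ↦ L(η,v)` over `ℝ` for the hinge loss. -/
def hingeMinimizerSet (η : ℝ) : Set ℝ :=
  {v | ∀ w, hingeCondRisk η v ≤ hingeCondRisk η w}

/-- The hinge loss is not suitable for class probability estimation: there is no link
function `ψ : [0,1] → ℝ` such that the composite loss `(l,ψ)` is strictly proper
(`v*_ψ(η) = {η}` for all `η ∈ [0,1]`) and non-degenerate (`Im ψ ∩ v*(η) ≠ ∅` for all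
`η ∈ [0,1]`). -/
theorem hinge_no_strictly_proper_link :
    ¬ ∃ ψ : ℝ → ℝ,
      (∀ η ∈ Icc (0:ℝ) 1,
        {q ∈ Icc (0:ℝ) 1 | ∀ q' ∈ Icc (0:ℝ) 1,
          hingeCondRisk η (ψ q) ≤ hingeCondRisk η (ψ q')} = {η}) ∧
      (∀ η ∈ Icc (0:ℝ) 1, (ψ '' Icc (0:ℝ) 1 ∩ hingeMinimizerSet η).Nonempty) := by
  rintro ⟨ψ, hp, hn⟩
  have m1 : (3/4:ℝ) ∈ Icc (0:ℝ) 1 := by constructor <;> norm_num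
  have m2 : (4/5:ℝ) ∈ Icc (0:ℝ) 1 := by constructor <;> norm_num
  obtain ⟨v, ⟨q, hq, rfl⟩, hv⟩ := hn _ m1
  have h1 : q ∈ ({3/4} : Set ℝ) := by
    rw [← hp _ m1]
    exact ⟨hq, fun q' _ => hv (ψ q')⟩
  have e : ψ q = 1 := by
    have h := hv 1
    unfold hingeCondRisk at h
    norm_num at h
    have a1 := le_max_left 0 (1 - ψ q)
    have a2 := le_max_right 0 (1 - ψ q)
    have a3 := le_max_left 0 (1 + ψ q)
    have a4 := le_max_right 0 (1 + ψ q)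
    apply le_antisymm <;> linarith
  have h2 : q ∈ ({4/5} : Set ℝ) := by
    rw [← hp _ m2]
    refine ⟨hq, fun q' _ => ?_⟩
    rw [e]
    unfold hingeCondRisk
    norm_num
    have a1 := le_max_left 0 (1 - ψ q')
    have a2 := le_max_right 0 (1 - ψ q')
    have a3 := le_max_left 0 (1 + ψ q')
    have a4 := le_max_right 0 (1 + ψ q')
    linarith
  rw [mem_singleton_iff] at h1 h2
  rw [h1] at h2
  norm_num at h2
end

section
/- Let l be the squared hinge loss on V = ℝ, given by l(y,v) = max(0, 1 − yv)². Then the set v*(η) of minimizers of v ↦ L(η,v) = η·max(0,1−v)² + (1−η)·max(0,1+v)² over ℝ is: v*(η) = {2η − 1} for η ∈ (0,1), v*(1) = [1,∞), and v*(0) = (−∞,−1]. Moreover, with the link ψ(η) = 2η − 1, the composite loss (l,ψ) is a natural CPE loss: it is strictly proper, non-degenerate, and the sets v*(η), η ∈ [0,1], disjointly cover ℝ; the inverse link is ψ⁻¹(v) = T((v+1)/2), where T truncates to [0,1]. -/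
open Set

/-- The conditional risk of the squared hinge loss `l(y,v) = max(0, 1 − yv)²`:
`L(η,v) = η·max(0,1−v)² + (1−η)·max(0,1+v)²`. -/
def sqHingeCondRisk (η v : ℝ) : ℝ :=
  η * (max 0 (1 - v))^2 + (1 - η) * (max 0 (1 + v))^2

/-- `v*(η)`: the set of minimizers of `v ↦ L(η,v)` over `ℝ` for the squared hinge loss. -/
def sqHingeMinimizerSet (η : ℝ) : Set ℝ :=
  {v | ∀ w, sqHingeCondRisk η v ≤ sqHingeCondRisk η w}

lemma sqh_lower {η : ℝ} (h0 : 0 ≤ η) (h1 : η ≤ 1) (v : ℝ) :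
    4 * η * (1 - η) + (η * max 0 (1 - v) - (1 - η) * max 0 (1 + v))^2 ≤ sqHingeCondRisk η v := by
  unfold sqHingeCondRisk
  have ha : 0 ≤ max 0 (1 - v) := le_max_left _ _
  have ha' : 1 - v ≤ max 0 (1 - v) := le_max_right _ _
  have hb : 0 ≤ max 0 (1 + v) := le_max_left _ _
  have hb' : 1 + v ≤ max 0 (1 + v) := le_max_right _ _
  generalize max 0 (1 - v) = a at *
  generalize max 0 (1 + v) = b at *
  have hs : 0 ≤ (a + b)^2 - 4 := by nlinarith
  have := mul_nonneg (mul_nonneg h0 (sub_nonneg.2 h1)) hs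
  nlinarith

lemma sqh_val {η : ℝ} (h0 : 0 ≤ η) (h1 : η ≤ 1) :
    sqHingeCondRisk η (2 * η - 1) = 4 * η * (1 - η) := by
  unfold sqHingeCondRisk
  rw [max_eq_right (by linarith), max_eq_right (by linarith)]
  ring

lemma sqh_inv {η v : ℝ} (h0 : 0 ≤ η) (h1 : η ≤ 1)
    (h : sqHingeCondRisk η v ≤ sqHingeCondRisk η (2 * η - 1)) :
    η = max 0 (min 1 ((v + 1) / 2)) := by
  have hl := sqh_lower h0 h1 v
  rw [sqh_val h0 h1] at h
  have hz : η * max 0 (1 - v) - (1 - η) * max 0 (1 + v) = 0 := by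
    apply pow_eq_zero_iff (two_ne_zero) |>.1
    exact le_antisymm (by linarith) (sq_nonneg _)
  rcases le_total v (-1) with hv | hv
  · rw [max_eq_right (by linarith : 0 ≤ 1 - v), max_eq_left (by linarith : 1 + v ≤ 0)] at hz
    rw [min_eq_right (by linarith), max_eq_left (by linarith)]
    nlinarith
  · rcases le_total v 1 with hv' | hv'
    · rw [max_eq_right (by linarith : 0 ≤ 1 - v), max_eq_right (by linarith : 0 ≤ 1 + v)] at hz
      rw [min_eq_right (by linarith), max_eq_right (by linarith)]
      linarith
    · rw [max_eq_left (by linarith : 1 - v ≤ 0), max_eq_right (by linarith : 0 ≤ 1 + v)] at hz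
      rw [min_eq_left (by linarith), max_eq_right (by linarith)]
      nlinarith

lemma sqh_mem_self {η : ℝ} (h0 : 0 ≤ η) (h1 : η ≤ 1) :
    2 * η - 1 ∈ sqHingeMinimizerSet η := by
  intro w
  rw [sqh_val h0 h1]
  nlinarith [sqh_lower h0 h1 w,
    sq_nonneg (η * max 0 (1 - w) - (1 - η) * max 0 (1 + w))]

lemma sqh_mem_one {v : ℝ} (h : 1 ≤ v) : v ∈ sqHingeMinimizerSet 1 := by
  intro w
  have : sqHingeCondRisk 1 v = 0 := by
    unfold sqHingeCondRisk
    rw [max_eq_left (by linarith : 1 - v ≤ 0)]; ring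
  rw [this]
  unfold sqHingeCondRisk
  have := sq_nonneg (max 0 (1 - w))
  linarith

lemma sqh_mem_zero {v : ℝ} (h : v ≤ -1) : v ∈ sqHingeMinimizerSet 0 := by
  intro w
  have : sqHingeCondRisk 0 v = 0 := by
    unfold sqHingeCondRisk
    rw [max_eq_left (by linarith : 1 + v ≤ 0)]; ring
  rw [this]
  unfold sqHingeCondRisk
  have := sq_nonneg (max 0 (1 + w))
  linarith

/-- The squared hinge loss on `V = ℝ` with link `ψ(η) = 2η − 1` is a natural CPE loss:
`v*(η) = {2η−1}` for `η ∈ (0,1)`, `v*(1) = [1,∞)`, `v*(0) = (−∞,−1]`, the composite loss is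
strictly proper and non-degenerate, the sets `v*(η)` disjointly cover `ℝ`, and the inverse
link is `ψ⁻¹(v) = T((v+1)/2)` where `T` truncates to `[0,1]`. -/
theorem squared_hinge_loss_natural_CPE :
    -- the minimizer sets
    (∀ η ∈ Ioo (0:ℝ) 1, sqHingeMinimizerSet η = {2 * η - 1}) ∧
    sqHingeMinimizerSet 1 = Ici 1 ∧
    sqHingeMinimizerSet 0 = Iic (-1) ∧
    -- strictly proper: v*_ψ(η) = {η}
    (∀ η ∈ Icc (0:ℝ) 1,
      {q ∈ Icc (0:ℝ) 1 | ∀ q' ∈ Icc (0:ℝ) 1,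
        sqHingeCondRisk η (2 * q - 1) ≤ sqHingeCondRisk η (2 * q' - 1)} = {η}) ∧
    -- non-degenerate: Im ψ ∩ v*(η) ≠ ∅
    (∀ η ∈ Icc (0:ℝ) 1,
      ((fun q : ℝ => 2 * q - 1) '' Icc (0:ℝ) 1 ∩ sqHingeMinimizerSet η).Nonempty) ∧
    -- the sets v*(η) disjointly cover ℝ
    ((⋃ η ∈ Icc (0:ℝ) 1, sqHingeMinimizerSet η) = univ) ∧
    (∀ η₁ ∈ Icc (0:ℝ) 1, ∀ η₂ ∈ Icc (0:ℝ) 1, η₁ ≠ η₂ →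
      sqHingeMinimizerSet η₁ ∩ sqHingeMinimizerSet η₂ = ∅) ∧
    -- the inverse link is the truncation ψ⁻¹(v) = T((v+1)/2)
    (∀ v : ℝ, ∀ η ∈ Icc (0:ℝ) 1, v ∈ sqHingeMinimizerSet η →
      η = max 0 (min 1 ((v + 1) / 2))) := by
  refine ⟨?_, ?_, ?_, ?_, ?_, ?_, ?_, ?_⟩
  · rintro η ⟨h0, h1⟩
    ext v
    rw [mem_singleton_iff]
    constructor
    · intro h
      have := sqh_inv h0.le h1.le (h _)
      grind
    · rintro rfl
      exact sqh_mem_self h0.le h1.le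
  · ext v
    rw [mem_Ici]
    refine ⟨fun h => ?_, sqh_mem_one⟩
    have := sqh_inv zero_le_one le_rfl (h _)
    grind
  · ext v
    rw [mem_Iic]
    refine ⟨fun h => ?_, sqh_mem_zero⟩
    have := sqh_inv le_rfl zero_le_one (h _)
    grind
  · rintro η ⟨h0, h1⟩
    ext q
    rw [mem_singleton_iff]
    constructor
    · rintro ⟨⟨hq0, hq1⟩, h⟩
      have := sqh_inv h0 h1 (h η ⟨h0, h1⟩)
      grind
    · rintro rfl
      exact ⟨⟨h0, h1⟩, fun q' _ => sqh_mem_self h0 h1 _⟩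
  · rintro η ⟨h0, h1⟩
    exact ⟨2 * η - 1, ⟨η, ⟨h0, h1⟩, rfl⟩, sqh_mem_self h0 h1⟩
  · rw [eq_univ_iff_forall]
    intro v
    simp only [mem_iUnion]
    rcases le_total v (-1) with hv | hv
    · exact ⟨0, ⟨le_rfl, zero_le_one⟩, sqh_mem_zero hv⟩
    · rcases le_total v 1 with hv' | hv'
      · refine ⟨(v + 1) / 2, ⟨by linarith, by linarith⟩, ?_⟩
        have := sqh_mem_self (η := (v + 1) / 2) (by linarith) (by linarith)
        rwa [show 2 * ((v + 1) / 2) - 1 = v by ring] at this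
      · exact ⟨1, ⟨zero_le_one, le_rfl⟩, sqh_mem_one hv'⟩
  · rintro η₁ ⟨h0, h1⟩ η₂ ⟨h0', h1'⟩ hne
    rw [eq_empty_iff_forall_notMem]
    rintro v ⟨hv, hv'⟩
    exact hne ((sqh_inv h0 h1 (hv _)).trans (sqh_inv h0' h1' (hv' _)).symm)
  · rintro v η ⟨h0, h1⟩ h
    exact sqh_inv h0 h1 (h _)
end
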